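/- For every a > 0 and α > 2, the function x ↦ (a/(a+‖x‖^α))² is integrable on ℝ² and ∫_{ℝ²} (a/(a+‖x‖^α))² dx = 2·a^{2/α}·π²·(α−2)/(α²·sin(2π/α)). -/

import Mathlib

open Real MeasureTheory

/-!
In polar coordinates the integral over a `d`-dimensional space becomes a multiple of
`∫₀^∞ r ^ (d - 1) * (a / (a + r ^ α)) ^ ρ dr`. Substituting `x = r ^ α / a` and then
`t = x / (1 + x)` turns this into Euler's integral for `B(d / α, ρ - d / α)`. For `d = ρ = 2` the
value `B(s, 2 - s) = (1 - s) Γ(s) Γ(1 - s)` is given by the reflection formula.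
-/

open Set Module ProbabilityTheory

section BetaIntegral

variable {u v : ℝ}

lemma eqOn_ofReal_betaIntegrand (u v : ℝ) :
    EqOn (fun t : ℝ ↦ (t : ℂ) ^ ((u : ℂ) - 1) * (1 - (t : ℂ)) ^ ((v : ℂ) - 1))
      (fun t ↦ ((t ^ (u - 1) * (1 - t) ^ (v - 1) : ℝ) : ℂ)) (Ioo 0 1) := by
  rintro t ⟨ht0, ht1⟩
  simp only [Complex.ofReal_mul, Complex.ofReal_cpow ht0.le,
    Complex.ofReal_cpow (sub_nonneg.2 ht1.le), Complex.ofReal_sub, Complex.ofReal_one]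

lemma integrableOn_rpow_mul_one_sub_rpow (hu : 0 < u) (hv : 0 < v) :
    IntegrableOn (fun t : ℝ ↦ t ^ (u - 1) * (1 - t) ^ (v - 1)) (Ioo 0 1) := by
  have hconv := Complex.betaIntegral_convergent (u := u) (v := v) (by simpa) (by simpa)
  rw [intervalIntegrable_iff_integrableOn_Ioo_of_le zero_le_one] at hconv
  simpa using! (hconv.congr_fun (eqOn_ofReal_betaIntegrand u v) measurableSet_Ioo).re

lemma integral_rpow_mul_one_sub_rpow (hu : 0 < u) (hv : 0 < v) :
    ∫ t in Ioo (0 : ℝ) 1, t ^ (u - 1) * (1 - t) ^ (v - 1) = beta u v := by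
  rw [beta_eq_betaIntegralReal u v hu hv, Complex.betaIntegral,
    intervalIntegral.integral_of_le zero_le_one, integral_Ioc_eq_integral_Ioo,
    setIntegral_congr_fun measurableSet_Ioo (eqOn_ofReal_betaIntegrand u v),
    integral_complex_ofReal, Complex.ofReal_re]

lemma hasDerivAt_div_one_add {x : ℝ} (hx : 1 + x ≠ 0) :
    HasDerivAt (fun x : ℝ ↦ x / (1 + x)) (((1 + x) ^ 2)⁻¹) x := by
  refine ((hasDerivAt_id' x).div ((hasDerivAt_id' x).const_add 1) hx).congr_deriv ?_
  field_simp
  ring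

lemma bijOn_div_one_add : BijOn (fun x : ℝ ↦ x / (1 + x)) (Ioi 0) (Ioo 0 1) := by
  refine InvOn.bijOn (f' := fun t ↦ t / (1 - t)) ⟨?_, ?_⟩ ?_ ?_
  · intro x (hx : 0 < x)
    have : 1 + x ≠ 0 := by positivity
    simp only
    field_simp
    ring
  · rintro t ⟨-, ht⟩
    have : 1 - t ≠ 0 := (sub_pos.2 ht).ne'
    simp only
    field_simp
    ring
  · intro x (hx : 0 < x)
    exact ⟨by positivity, (div_lt_one (by positivity)).2 (by linarith)⟩
  · rintro t ⟨ht0, ht1⟩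
    exact div_pos ht0 (sub_pos.2 ht1)

lemma eqOn_betaIntegrand_comp_div_one_add (u v : ℝ) :
    EqOn (fun x : ℝ ↦
        |((1 + x) ^ 2)⁻¹| • ((x / (1 + x)) ^ (u - 1) * (1 - x / (1 + x)) ^ (v - 1)))
      (fun x ↦ x ^ (u - 1) * (1 + x) ^ (-(u + v))) (Ioi 0) := by
  intro x (hx : 0 < x)
  have h1x : 0 < 1 + x := by positivity
  have hsub : 1 - x / (1 + x) = (1 + x)⁻¹ := by field_simp; ring
  have hexp : -(u + v) = -2 + (-(u - 1) + -(v - 1)) := by ring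
  simp only
  rw [abs_of_pos (by positivity), hsub, smul_eq_mul, div_rpow hx.le h1x.le, inv_rpow h1x.le, hexp,
    rpow_add h1x, rpow_add h1x, rpow_neg h1x.le 2, rpow_two, rpow_neg h1x.le, rpow_neg h1x.le]
  ring

lemma integrableOn_rpow_mul_one_add_rpow (hu : 0 < u) (hv : 0 < v) :
    IntegrableOn (fun x : ℝ ↦ x ^ (u - 1) * (1 + x) ^ (-(u + v))) (Ioi 0) := by
  rw [← integrableOn_congr_fun (eqOn_betaIntegrand_comp_div_one_add u v) measurableSet_Ioi,
    ← integrableOn_image_iff_integrableOn_abs_deriv_smul measurableSet_Ioi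
      (fun x (hx : 0 < x) ↦ (hasDerivAt_div_one_add (by positivity)).hasDerivWithinAt)
      bijOn_div_one_add.injOn (fun t ↦ t ^ (u - 1) * (1 - t) ^ (v - 1)),
    bijOn_div_one_add.image_eq]
  exact integrableOn_rpow_mul_one_sub_rpow hu hv

lemma integral_rpow_mul_one_add_rpow (hu : 0 < u) (hv : 0 < v) :
    ∫ x in Ioi (0 : ℝ), x ^ (u - 1) * (1 + x) ^ (-(u + v)) = beta u v := by
  rw [← setIntegral_congr_fun measurableSet_Ioi (eqOn_betaIntegrand_comp_div_one_add u v),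
    ← integral_image_eq_integral_abs_deriv_smul measurableSet_Ioi
      (fun x (hx : 0 < x) ↦ (hasDerivAt_div_one_add (by positivity)).hasDerivWithinAt)
      bijOn_div_one_add.injOn (fun t ↦ t ^ (u - 1) * (1 - t) ^ (v - 1)),
    bijOn_div_one_add.image_eq, integral_rpow_mul_one_sub_rpow hu hv]

lemma beta_two_sub {s : ℝ} (hs : s ≠ 1) : beta s (2 - s) = (1 - s) * (π / sin (π * s)) := by
  have hGamma : Gamma (2 - s) = (1 - s) * Gamma (1 - s) := by
    rw [← Gamma_add_one (sub_ne_zero.2 hs.symm)]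
    ring_nf
  rw [beta, add_sub_cancel, Gamma_two, div_one, hGamma, ← Gamma_mul_Gamma_one_sub]
  ring

end BetaIntegral

section RadialIntegral

variable {a α ρ s : ℝ}

lemma eqOn_betaPrimeIntegrand_comp_rpow (ha : 0 < a) (hα : α ≠ 0) (ρ s : ℝ) :
    EqOn (fun r : ℝ ↦ r ^ (α - 1) •
        ((a⁻¹ * r ^ α) ^ (s / α - 1) * (1 + a⁻¹ * r ^ α) ^ (-ρ)))
      (fun r ↦ a ^ (1 - s / α) * (r ^ (s - 1) * (a / (a + r ^ α)) ^ ρ)) (Ioi 0) := by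
  intro r (hr : 0 < r)
  have hrα : 0 < r ^ α := by positivity
  have hbase : 1 + a⁻¹ * r ^ α = (a / (a + r ^ α))⁻¹ := by field_simp
  have hpow : (a⁻¹ * r ^ α) ^ (s / α - 1) = a ^ (1 - s / α) * r ^ (s - α) := by
    rw [mul_rpow (by positivity) hrα.le, inv_rpow ha.le, ← rpow_neg ha.le, ← rpow_mul hr.le,
      neg_sub, mul_sub, mul_div_cancel₀ s hα, mul_one]
  have hr_exp : r ^ (s - 1) = r ^ (α - 1) * r ^ (s - α) := by
    rw [← rpow_add hr]
    ring_nf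
  simp only
  rw [hpow, hbase, inv_rpow (by positivity), rpow_neg (by positivity), inv_inv, hr_exp,
    smul_eq_mul]
  ring

lemma integrableOn_rpow_mul_div_add_rpow (ha : 0 < a) (hs : 0 < s / α) (hρ : s / α < ρ) :
    IntegrableOn (fun r : ℝ ↦ r ^ (s - 1) * (a / (a + r ^ α)) ^ ρ) (Ioi 0) := by
  have hα : α ≠ 0 := (div_ne_zero_iff.1 hs.ne').2
  have hbeta := integrableOn_rpow_mul_one_add_rpow hs (sub_pos.2 hρ)
  rw [add_sub_cancel, ← mul_zero a⁻¹,
    ← integrableOn_Ioi_comp_mul_left_iff _ _ (inv_pos.2 ha), ← integrableOn_Ioi_comp_rpow_iff' _ hα,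
    integrableOn_congr_fun (eqOn_betaPrimeIntegrand_comp_rpow ha hα ρ s) measurableSet_Ioi] at hbeta
  exact (integrable_const_mul_iff (rpow_pos_of_pos ha _).ne'.isUnit _).1 hbeta

lemma integral_rpow_mul_div_add_rpow (ha : 0 < a) (hs : 0 < s / α) (hρ : s / α < ρ) :
    ∫ r in Ioi (0 : ℝ), r ^ (s - 1) * (a / (a + r ^ α)) ^ ρ =
      a ^ (s / α) / |α| * beta (s / α) (ρ - s / α) := by
  have hα : α ≠ 0 := (div_ne_zero_iff.1 hs.ne').2
  let betaPrime (x : ℝ) : ℝ := x ^ (s / α - 1) * (1 + x) ^ (-ρ)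
  have hsubst : beta (s / α) (ρ - s / α) = a⁻¹ * (|α| * (a ^ (1 - s / α) *
      ∫ r in Ioi (0 : ℝ), r ^ (s - 1) * (a / (a + r ^ α)) ^ ρ)) := by
    calc beta (s / α) (ρ - s / α)
      _ = ∫ x in Ioi 0, betaPrime x := by
        rw [← integral_rpow_mul_one_add_rpow hs (sub_pos.2 hρ), add_sub_cancel]
      _ = a⁻¹ * ∫ y in Ioi 0, betaPrime (a⁻¹ * y) := by
        rw [← smul_eq_mul, integral_comp_mul_left_Ioi' _ _ (inv_pos.2 ha), mul_zero]
      _ = a⁻¹ * (|α| * ∫ r in Ioi 0, r ^ (α - 1) • betaPrime (a⁻¹ * r ^ α)) := by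
        rw [← integral_comp_rpow_Ioi _ hα]
        simp only [smul_eq_mul, mul_assoc |α|, integral_const_mul]
      _ = _ := by
        rw [setIntegral_congr_fun measurableSet_Ioi (eqOn_betaPrimeIntegrand_comp_rpow ha hα ρ s),
          integral_const_mul]
  rw [hsubst, rpow_sub ha, rpow_one]
  field_simp

end RadialIntegral

section NormedSpace

lemma pow_sub_one_eq_rpow {n : ℕ} (hn : 0 < n) (r : ℝ) : r ^ (n - 1) = r ^ ((n : ℝ) - 1) := by
  rw [← rpow_natCast, Nat.cast_pred hn]

variable {E : Type*} [NormedAddCommGroup E] [NormedSpace ℝ E] [FiniteDimensional ℝ E]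
  [Nontrivial E] [MeasurableSpace E] [BorelSpace E] (μ : Measure E) [μ.IsAddHaarMeasure]
  {a α ρ : ℝ}

lemma integrable_div_add_norm_rpow_rpow (ha : 0 < a) (hα : 0 < α) (hρ : finrank ℝ E / α < ρ) :
    Integrable (fun x : E ↦ (a / (a + ‖x‖ ^ α)) ^ ρ) μ := by
  have hdim : (0 : ℝ) < finrank ℝ E / α := div_pos (Nat.cast_pos.2 finrank_pos) hα
  rw [integrable_fun_norm_addHaar μ (f := fun r ↦ (a / (a + r ^ α)) ^ ρ)]
  simpa only [smul_eq_mul, pow_sub_one_eq_rpow finrank_pos] using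
    integrableOn_rpow_mul_div_add_rpow ha hdim hρ

lemma integral_div_add_norm_rpow_rpow (ha : 0 < a) (hα : 0 < α) (hρ : finrank ℝ E / α < ρ) :
    ∫ x : E, (a / (a + ‖x‖ ^ α)) ^ ρ ∂μ =
      finrank ℝ E * μ.real (Metric.ball 0 1) *
        (a ^ (finrank ℝ E / α) / α * beta (finrank ℝ E / α) (ρ - finrank ℝ E / α)) := by
  have hdim : (0 : ℝ) < finrank ℝ E / α := div_pos (Nat.cast_pos.2 finrank_pos) hα
  rw [integral_fun_norm_addHaar μ (fun r ↦ (a / (a + r ^ α)) ^ ρ)]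
  simp only [smul_eq_mul, nsmul_eq_mul, pow_sub_one_eq_rpow finrank_pos]
  rw [integral_rpow_mul_div_add_rpow ha hdim hρ, abs_of_pos hα, mul_assoc]

end NormedSpace

section Plane

variable {E : Type*} [NormedAddCommGroup E] [InnerProductSpace ℝ E] [FiniteDimensional ℝ E]
  [MeasurableSpace E] [BorelSpace E]

lemma volume_real_unitBall_of_finrank_eq_two (hE : finrank ℝ E = 2) :
    volume.real (Metric.ball (0 : E) 1) = π := by
  have : Nontrivial E := nontrivial_of_finrank_pos (R := ℝ) (by lia)
  simp [Measure.real, InnerProductSpace.volume_ball_of_dim_even (k := 1) hE, pi_nonneg]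

theorem outage_exponent_integral_general (hE : finrank ℝ E = 2) {a α : ℝ} (ha : 0 < a)
    (hα : 1 < α) (hα2 : α ≠ 2) :
    Integrable (fun x : E ↦ (a / (a + ‖x‖ ^ α)) ^ 2) ∧
    ∫ x : E, (a / (a + ‖x‖ ^ α)) ^ 2 =
      2 * a ^ (2 / α) * π ^ 2 * (α - 2) / (α ^ 2 * sin (2 * π / α)) := by
  have : Nontrivial E := nontrivial_of_finrank_pos (R := ℝ) (by lia)
  have hα0 : 0 < α := by linarith
  have hdim : (finrank ℝ E : ℝ) = 2 := by exact_mod_cast hE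
  have hρ : finrank ℝ E / α < 2 := by rw [hdim, div_lt_iff₀ hα0]; linarith
  have hs : 2 / α ≠ 1 := by rwa [ne_eq, div_eq_one_iff_eq hα0.ne', eq_comm]
  simp only [← rpow_two (_ / _)]
  refine ⟨integrable_div_add_norm_rpow_rpow volume ha hα0 hρ, ?_⟩
  rw [integral_div_add_norm_rpow_rpow volume ha hα0 hρ, hdim,
    volume_real_unitBall_of_finrank_eq_two hE, beta_two_sub hs,
    show π * (2 / α) = 2 * π / α by ring]
  field_simp

end Plane

/-- For every `a > 0` and `α > 2`, the function `x ↦ (a/(a+‖x‖^α))²` is integrable on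
`ℝ²` and `∫_{ℝ²} (a/(a+‖x‖^α))² dx = 2·a^(2/α)·π²·(α−2)/(α²·sin(2π/α))`. -/
theorem outage_exponent_integral (a α : ℝ) (ha : 0 < a) (hα : 2 < α) :
    Integrable (fun x : EuclideanSpace ℝ (Fin 2) => (a / (a + ‖x‖ ^ α)) ^ 2) ∧
    ∫ x : EuclideanSpace ℝ (Fin 2), (a / (a + ‖x‖ ^ α)) ^ 2 =
      2 * a ^ (2 / α) * π ^ 2 * (α - 2) / (α ^ 2 * Real.sin (2 * π / α)) :=
  outage_exponent_integral_general finrank_euclideanSpace_fin ha (by linarith) hα.ne'
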